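/- arXiv:math/0605767 — 2 statements merged into one kernel-verified Lean document; each statement's English description precedes it below -/
import Mathlib

section
/- Let x be a fixed nonzero vector in ℝⁿ and let κmax ≥ 1. Then { Cx : C an n×n real symmetric positive definite matrix with κ(C) ≤ κmax } = { y ∈ ℝⁿ : y ≠ 0, ⟨x,y⟩ > 0, and sin ∠(x,y) ≤ (κmax − 1)/(κmax + 1) }; that is, the set of all images of x under real SPD matrices whose condition number is at most κmax is exactly the pointed circular cone of vectors making an acute angle with x whose sine is at most (κmax − 1)/(κmax + 1). -/
open Matrix

/-- The Euclidean norm of a vector in `ℝⁿ`. -/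
noncomputable def vnorm {n : ℕ} (x : Fin n → ℝ) : ℝ := Real.sqrt (x ⬝ᵥ x)

/-- The angle `∠(x,y) = arccos(⟨x,y⟩/(‖x‖‖y‖)) ∈ [0,π]` between vectors in `ℝⁿ`. -/
noncomputable def vangle {n : ℕ} (x y : Fin n → ℝ) : ℝ :=
  Real.arccos ((x ⬝ᵥ y) / (vnorm x * vnorm y))

/-- The spectral condition number `κ(C) = λmax(C)/λmin(C)` of a symmetric matrix. -/
noncomputable def condNum {n : ℕ} {C : Matrix (Fin n) (Fin n) ℝ} (hC : C.IsHermitian) : ℝ :=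
  (⨆ i, hC.eigenvalues i) / (⨅ i, hC.eigenvalues i)

/-!
Put `ρ = (κ - 1) / (κ + 1)`. A symmetric matrix `C` is positive definite with condition number at
most `κ` iff its spectrum lies in an interval `[c (1 - ρ), c (1 + ρ)]` with `c > 0`, i.e. iff
`‖C - c‖ ≤ ρ c` in the operator norm. Since a multiple of a reflection takes `x` to any prescribed
`w` with operator norm `‖w‖ / ‖x‖`, the images `C x` for fixed `c` fill the ball of radius
`ρ c ‖x‖` about `c x`. As `c` varies these balls sweep out the cone of sine `ρ`: the distance from
`c x` to the line `ℝ y` is `c ‖x‖ sin ∠(x, y)`, attained at `y` for a suitable `c`.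
-/

section Geometry

open InnerProductGeometry

open scoped RealInnerProductSpace

variable {E : Type*} [NormedAddCommGroup E] [InnerProductSpace ℝ E]

lemma sin_angle_mul_norm_le_norm_sub (x y : E) : Real.sin (angle x y) * ‖x‖ ≤ ‖y - x‖ := by
  rw [sin_angle_mul_norm_eq_sin_angle_mul_norm, norm_sub_rev]
  exact mul_le_of_le_one_left (norm_nonneg _) (Real.sin_le_one _)

lemma norm_sub_eq_sin_angle_mul_norm {x y : E} (h : ⟪y, x - y⟫ = 0) :
    ‖y - x‖ = Real.sin (angle x y) * ‖x‖ := by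
  rw [sin_angle_mul_norm_eq_sin_angle_mul_norm, (inner_eq_zero_iff_angle_eq_pi_div_two _ _).1 h,
    Real.sin_pi_div_two, one_mul, norm_sub_rev]

lemma inner_pos_of_norm_sub_lt_norm {x y : E} (h : ‖y - x‖ < ‖x‖) : 0 < ⟪x, y⟫ := by
  have hsq : ‖y - x‖ ^ 2 < ‖x‖ ^ 2 := by gcongr
  rw [norm_sub_sq_real, real_inner_comm] at hsq
  linarith [sq_nonneg ‖y‖]

theorem exists_norm_sub_smul_le_iff {x y : E} (hx : x ≠ 0) {ρ : ℝ} (hρ : ρ < 1) :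
    (∃ c > 0, ‖y - c • x‖ ≤ ρ * c * ‖x‖) ↔ 0 < ⟪x, y⟫ ∧ Real.sin (angle x y) ≤ ρ := by
  have hnorm {c : ℝ} (hc : 0 < c) : ‖c • x‖ = c * ‖x‖ := norm_smul_of_nonneg hc.le x
  constructor
  · rintro ⟨c, hc, hle⟩
    have hcx : 0 < ‖c • x‖ := norm_pos_iff.2 (smul_ne_zero hc.ne' hx)
    rw [mul_assoc, ← hnorm hc] at hle
    constructor
    · have hinner := inner_pos_of_norm_sub_lt_norm (hle.trans_lt (mul_lt_of_lt_one_left hcx hρ))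
      rw [real_inner_smul_left] at hinner
      exact pos_of_mul_pos_right hinner hc.le
    · rw [← angle_smul_left_of_pos x y hc]
      exact le_of_mul_le_mul_right ((sin_angle_mul_norm_le_norm_sub _ _).trans hle) hcx
  · rintro ⟨hxy, hsin⟩
    have hy : y ≠ 0 := by
      rintro rfl
      simp at hxy
    -- `c • x` is the point of the ray through `x` whose projection onto the line `ℝ y` is `y`.
    set c := ⟪y, y⟫ / ⟪x, y⟫ with hc_def
    have hc : 0 < c := div_pos (real_inner_self_pos.2 hy) hxy
    have horth : ⟪y, c • x - y⟫ = 0 := by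
      rw [inner_sub_right, real_inner_smul_right, real_inner_comm, hc_def,
        div_mul_cancel₀ _ hxy.ne', sub_self]
    refine ⟨c, hc, ?_⟩
    rw [norm_sub_eq_sin_angle_mul_norm horth, angle_smul_left_of_pos x y hc, mul_assoc, hnorm hc]
    gcongr

theorem exists_isSymmetric_norm_le_apply_eq {x : E} (hx : x ≠ 0) (w : E) :
    ∃ T : E →L[ℝ] E, T.IsSymmetric ∧ ‖T‖ ≤ ‖w‖ / ‖x‖ ∧ T x = w := by
  have hx' : ‖x‖ ≠ 0 := norm_ne_zero_iff.2 hx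
  -- The reflection exchanging the equally long vectors `‖w‖ • x` and `‖x‖ • w`.
  set R := (ℝ ∙ (‖w‖ • x - ‖x‖ • w))ᗮ.reflection
  have hR : ‖w‖ • R x = ‖x‖ • w := by
    rw [← map_smul]
    exact Submodule.reflection_sub (by simp only [norm_smul, norm_norm, mul_comm])
  have hR_symm : (R.toLinearEquiv : E →ₗ[ℝ] E).IsSymmetric := fun u v ↦
    R.inner_map_eq_flip u v
  refine ⟨(‖w‖ / ‖x‖) • (R : E →L[ℝ] E), ?_, ?_, ?_⟩
  · exact hR_symm.smul (by simp)
  · refine ContinuousLinearMap.opNorm_le_bound _ (by positivity) fun v ↦ ?_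
    simp [norm_smul]
  · simp [div_eq_inv_mul, mul_smul, hR, hx']

end Geometry

section OperatorNorm

open scoped Matrix.Norms.L2Operator

variable {ι : Type*} [Fintype ι] [DecidableEq ι]

theorem exists_isHermitian_norm_sub_smul_one_le_iff {x : EuclideanSpace ℝ ι} (hx : x ≠ 0)
    (y : EuclideanSpace ℝ ι) (c r : ℝ) :
    (∃ C : Matrix ι ι ℝ, C.IsHermitian ∧ ‖C - c • 1‖ ≤ r ∧ toEuclideanCLM (𝕜 := ℝ) C x = y) ↔
      ‖y - c • x‖ ≤ r * ‖x‖ := by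
  constructor
  · rintro ⟨C, -, hCr, rfl⟩
    calc ‖toEuclideanCLM (𝕜 := ℝ) C x - c • x‖
        = ‖toEuclideanCLM (𝕜 := ℝ) (C - c • 1) x‖ := by simp
      _ ≤ ‖C - c • 1‖ * ‖x‖ := (toEuclideanCLM (𝕜 := ℝ) (C - c • 1)).le_opNorm x
      _ ≤ r * ‖x‖ := by gcongr
  · intro hle
    obtain ⟨T, hT_symm, hT_norm, hT_apply⟩ := exists_isSymmetric_norm_le_apply_eq hx (y - c • x)
    obtain ⟨A, hA⟩ : ∃ A : Matrix ι ι ℝ, toEuclideanCLM (𝕜 := ℝ) A = T :=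
      (toEuclideanCLM (𝕜 := ℝ) (n := ι)).surjective T
    have hA_herm : A.IsHermitian := by
      rw [← isSymmetric_toEuclideanLin_iff, ← coe_toEuclideanCLM_eq_toEuclideanLin, hA]
      exact hT_symm
    refine ⟨A + c • 1, hA_herm.add (isHermitian_one.smul (.all c)), ?_, ?_⟩
    · rw [add_sub_cancel_right, ← l2_opNorm_toEuclideanCLM, hA]
      exact hT_norm.trans ((div_le_iff₀ (norm_pos_iff.2 hx)).2 hle)
    · simp [hA, hT_apply]

lemma norm_sub_smul_one_eq_norm_eigenvalues_sub {𝕜 : Type*} [RCLike 𝕜] {C : Matrix ι ι 𝕜}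
    (hC : C.IsHermitian) (c : ℝ) : ‖C - c • 1‖ = ‖fun i ↦ hC.eigenvalues i - c‖ := by
  have hdiag : C - c • 1 = Unitary.conjStarAlgAut 𝕜 _ hC.eigenvectorUnitary
      (diagonal fun i ↦ ((hC.eigenvalues i - c : ℝ) : 𝕜)) := by
    have hsub : (diagonal fun i ↦ ((hC.eigenvalues i - c : ℝ) : 𝕜)) =
        diagonal (RCLike.ofReal ∘ hC.eigenvalues) - (c : 𝕜) • 1 := by
      rw [smul_one_eq_diagonal, diagonal_sub]
      simp only [RCLike.ofReal_sub, Function.comp_apply]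
    rw [hsub, map_sub, map_smul, map_one, ← hC.spectral_theorem,
      RCLike.real_smul_eq_coe_smul (K := 𝕜)]
  rw [hdiag, Unitary.conjStarAlgAut_apply, ← Unitary.coe_star, CStarRing.norm_mul_coe_unitary,
    CStarRing.norm_coe_unitary_mul, l2_opNorm_diagonal]
  simp only [Pi.norm_def, ← norm_toNNReal, RCLike.norm_ofReal, Real.norm_eq_abs]

end OperatorNorm

section ConditionNumber

open scoped Matrix.Norms.L2Operator

lemma pos_and_ciSup_div_ciInf_le_iff {ι : Type*} [Finite ι] [Nonempty ι] {f : ι → ℝ} {κ : ℝ}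
    (hκ : 0 ≤ κ) :
    (∀ i, 0 < f i) ∧ (⨆ i, f i) / (⨅ i, f i) ≤ κ ↔
      ∃ c > 0, ∀ i, |f i - c| ≤ (κ - 1) / (κ + 1) * c := by
  have habs (m t : ℝ) : |t - (κ + 1) / 2 * m| ≤ (κ - 1) / (κ + 1) * ((κ + 1) / 2 * m) ↔
      m ≤ t ∧ t ≤ κ * m := by
    have hr : (κ - 1) / (κ + 1) * ((κ + 1) / 2 * m) = (κ - 1) / 2 * m := by field_simp
    rw [hr, abs_le]
    constructor <;> rintro ⟨h₁, h₂⟩ <;> constructor <;> linarith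
  constructor
  · rintro ⟨hpos, hle⟩
    obtain ⟨j, hj⟩ := exists_eq_ciInf_of_finite (f := f)
    have hinf : 0 < ⨅ i, f i := hj ▸ hpos j
    refine ⟨(κ + 1) / 2 * ⨅ i, f i, by positivity, fun i ↦ (habs _ _).2 ⟨?_, ?_⟩⟩
    · exact ciInf_le (Set.finite_range f).bddBelow i
    · exact (le_ciSup (Set.finite_range f).bddAbove i).trans ((div_le_iff₀ hinf).1 hle)
  · rintro ⟨c, hc, hle⟩
    obtain ⟨m, rfl⟩ : ∃ m, (κ + 1) / 2 * m = c := ⟨2 / (κ + 1) * c, by field_simp⟩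
    have hm : 0 < m := pos_of_mul_pos_right hc (by positivity)
    simp only [habs] at hle
    have hinf : m ≤ ⨅ i, f i := le_ciInf fun i ↦ (hle i).1
    refine ⟨fun i ↦ hm.trans_le (hle i).1, (div_le_iff₀ (hm.trans_le hinf)).2 ?_⟩
    exact (ciSup_le fun i ↦ (hle i).2).trans (by gcongr)

theorem posDef_and_condNum_le_iff {n : ℕ} [NeZero n] {C : Matrix (Fin n) (Fin n) ℝ}
    (hC : C.IsHermitian) {κ : ℝ} (hκ : 0 ≤ κ) :
    C.PosDef ∧ condNum hC ≤ κ ↔ ∃ c > 0, ‖C - c • 1‖ ≤ (κ - 1) / (κ + 1) * c := by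
  simp only [hC.posDef_iff_eigenvalues_pos, condNum, pos_and_ciSup_div_ciInf_le_iff hκ,
    norm_sub_smul_one_eq_norm_eigenvalues_sub hC, pi_norm_le_iff_of_nonempty, Real.norm_eq_abs]

theorem exists_posDef_condNum_le_mulVec_eq_iff {n : ℕ} {x : Fin n → ℝ} (hx : x ≠ 0)
    (y : Fin n → ℝ) {κ : ℝ} (hκ : 0 ≤ κ) :
    (∃ (C : Matrix (Fin n) (Fin n) ℝ) (hC : C.PosDef),
        condNum hC.isHermitian ≤ κ ∧ C *ᵥ x = y) ↔
      ∃ c > 0, ‖WithLp.toLp 2 y - c • WithLp.toLp 2 x‖ ≤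
        (κ - 1) / (κ + 1) * c * ‖WithLp.toLp 2 x‖ := by
  have : NeZero n := ⟨by rintro rfl; exact hx (Subsingleton.elim _ _)⟩
  have hx' : WithLp.toLp 2 x ≠ 0 := (WithLp.toLp_eq_zero 2).not.2 hx
  simp only [← exists_isHermitian_norm_sub_smul_one_le_iff hx', toEuclideanCLM_toLp,
    (WithLp.toLp_injective 2).eq_iff]
  constructor
  · rintro ⟨C, hC, hcond, hCx⟩
    obtain ⟨c, hc, hle⟩ := (posDef_and_condNum_le_iff hC.isHermitian hκ).1 ⟨hC, hcond⟩
    exact ⟨c, hc, C, hC.isHermitian, hle, hCx⟩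
  · rintro ⟨c, hc, C, hC, hle, hCx⟩
    obtain ⟨hpos, hcond⟩ := (posDef_and_condNum_le_iff hC hκ).2 ⟨c, hc, hle⟩
    exact ⟨C, hpos, hcond, hCx⟩

end ConditionNumber

lemma vnorm_eq_norm {n : ℕ} (x : Fin n → ℝ) : vnorm x = ‖WithLp.toLp 2 x‖ := by
  simp [vnorm, EuclideanSpace.norm_eq, dotProduct, sq]

lemma inner_toLp_eq_dotProduct {ι : Type*} [Fintype ι] (x y : ι → ℝ) :
    inner ℝ (WithLp.toLp 2 x) (WithLp.toLp 2 y) = x ⬝ᵥ y := by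
  simp [EuclideanSpace.inner_toLp_toLp, dotProduct_comm]

lemma vangle_eq_angle {n : ℕ} (x y : Fin n → ℝ) :
    vangle x y = InnerProductGeometry.angle (WithLp.toLp 2 x) (WithLp.toLp 2 y) := by
  simp only [vangle, InnerProductGeometry.angle, vnorm_eq_norm, inner_toLp_eq_dotProduct]

/-- For a fixed nonzero `x ∈ ℝⁿ` and `κmax ≥ 1`, the set of images of `x`
under all real SPD matrices with condition number at most `κmax` is exactly the pointed
circular cone of vectors making an acute angle with `x` whose sine is at most
`(κmax − 1)/(κmax + 1)`. -/
theorem cone_of_posDef_images {n : ℕ} (x : Fin n → ℝ) (hx : x ≠ 0) (κmax : ℝ) (hκ : 1 ≤ κmax) :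
    {y : Fin n → ℝ | ∃ (C : Matrix (Fin n) (Fin n) ℝ) (hC : C.PosDef),
        condNum hC.isHermitian ≤ κmax ∧ C *ᵥ x = y}
      = {y : Fin n → ℝ | y ≠ 0 ∧ 0 < x ⬝ᵥ y ∧
          Real.sin (vangle x y) ≤ (κmax - 1) / (κmax + 1)} := by
  have hx' : WithLp.toLp 2 x ≠ 0 := (WithLp.toLp_eq_zero 2).not.2 hx
  have hρ : (κmax - 1) / (κmax + 1) < 1 := (div_lt_one (by linarith)).2 (by linarith)
  have hne {y : Fin n → ℝ} (hxy : 0 < x ⬝ᵥ y) : y ≠ 0 := by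
    rintro rfl
    simp at hxy
  ext y
  rw [Set.mem_ofPred_eq, Set.mem_ofPred_eq,
    exists_posDef_condNum_le_mulVec_eq_iff hx y (by linarith),
    exists_norm_sub_smul_le_iff hx' hρ, inner_toLp_eq_dotProduct, ← vangle_eq_angle]
  exact ⟨fun h ↦ ⟨hne h.1, h⟩, And.right⟩
end

section
/- In the preconditioned method with variable preconditioning, suppose k ≥ 1, m_k ≥ 1, and x_l ≠ x* for all l ≤ k. Then ‖e_{k+1}‖_A ≤ ‖e_k − α s_k − β (e_k − e_{k−1})‖_A for all real numbers α and β. -/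
open Matrix

/-- The `A`-norm `‖x‖_A = √⟨A x, x⟩`. -/
noncomputable def anorm {n : ℕ} (A : Matrix (Fin n) (Fin n) ℝ) (x : Fin n → ℝ) : ℝ :=
  Real.sqrt ((A *ᵥ x) ⬝ᵥ x)

/-!
In the `A`-inner product the step length is the one that removes from the error its projection onto
`p k`. Since the windows never move backwards, truncated Gram–Schmidt makes all directions within
one window pairwise conjugate, so no later step destroys the orthogonality of the error to the
directions already used. Hence `e (k + 1)` is the element of least norm in its coset modulo the span
of `p l`, `k - m k ≤ l ≤ k`. When `m k ≥ 1`, this span contains `s k`, `e k - e (k - 1)` and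
`e k - e (k + 1)`, so that the heavy-ball error lies in the same coset.
-/

section EnergyNorm

open scoped InnerProductSpace

variable {𝕜 E : Type*} [RCLike 𝕜] [SeminormedAddCommGroup E] [InnerProductSpace 𝕜 E]

theorem inner_sub_inner_div_smul_self (v u : E) : ⟪v, u - (⟪v, u⟫_𝕜 / ⟪v, v⟫_𝕜) • v⟫_𝕜 = 0 := by
  have inner_eq_zero_of_degenerate (hv : ⟪v, v⟫_𝕜 = 0) : ⟪v, u⟫_𝕜 = 0 := by
    have norm_eq_zero : ‖v‖ = 0 := by simpa [inner_self_eq_norm_sq_to_K] using hv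
    exact norm_le_zero_iff.mp <| by simpa [norm_eq_zero] using norm_inner_le_norm (𝕜 := 𝕜) v u
  rw [inner_sub_right, inner_smul_right, div_mul_cancel_of_imp inner_eq_zero_of_degenerate,
    sub_self]

theorem norm_le_of_inner_sub_eq_zero {u v : E} (h : ⟪u, v - u⟫_𝕜 = 0) : ‖u‖ ≤ ‖v‖ := by
  have pythagoras : ‖v‖ * ‖v‖ = ‖u‖ * ‖u‖ + ‖v - u‖ * ‖v - u‖ := by
    simpa only [add_sub_cancel] using
      norm_add_sq_eq_norm_sq_add_norm_sq_of_inner_eq_zero u (v - u) h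
  rw [mul_self_le_mul_self_iff (norm_nonneg u) (norm_nonneg v), pythagoras]
  exact le_add_of_nonneg_right (mul_self_nonneg ‖v - u‖)

variable (𝕜) in
/-- `p` arises from `s` by truncated Gram–Schmidt: `p k` is `s k` made orthogonal to the earlier
directions `p l` with `w k ≤ l < k`. The start `w k` of the window corresponds to `k - m k` for a
window of length `m k`. A `p l` of norm zero has coefficient `0 / 0 = 0`, but any other value would
change `p k` only by a vector of norm zero. -/
def IsTruncatedGramSchmidt (w : ℕ → ℕ) (s p : ℕ → E) : Prop :=
  ∀ k, p k = s k - ∑ l ∈ Finset.Ico (w k) k, (⟪p l, s k⟫_𝕜 / ⟪p l, p l⟫_𝕜) • p l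

variable (𝕜) in
/-- `e` is the sequence of errors of exact line searches along the directions `p`: each step removes
from the error its projection onto the current direction. A direction of norm zero has coefficient
`0 / 0 = 0`, but any other value would change the error only by a vector of norm zero. -/
def IsExactLineSearch (p e : ℕ → E) : Prop :=
  ∀ k, e (k + 1) = e k - (⟪p k, e k⟫_𝕜 / ⟪p k, p k⟫_𝕜) • p k

variable (𝕜) in
/-- The span of the directions available at step `k`: those in the window, and `p k` itself. -/
def searchSpace (w : ℕ → ℕ) (p : ℕ → E) (k : ℕ) : Submodule 𝕜 E :=
  Submodule.span 𝕜 (p '' Set.Icc (w k) k)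

variable {w : ℕ → ℕ} {s p e : ℕ → E} {k l : ℕ}

theorem direction_mem_searchSpace (hl : w k ≤ l) (hlk : l ≤ k) : p l ∈ searchSpace 𝕜 w p k :=
  Submodule.subset_span ⟨l, ⟨hl, hlk⟩, rfl⟩

namespace IsTruncatedGramSchmidt

theorem inner_eq_zero (hp : IsTruncatedGramSchmidt 𝕜 w s p) (hw : Monotone w)
    (hl : w k ≤ l) (hlk : l < k) : ⟪p l, p k⟫_𝕜 = 0 := by
  induction k using Nat.strong_induction_on generalizing l with
  | _ k ih =>
    have window_orthogonal : ∀ j ∈ Finset.Ico (w k) k, j ≠ l →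
        ⟪p l, (⟪p j, s k⟫_𝕜 / ⟪p j, p j⟫_𝕜) • p j⟫_𝕜 = 0 := by
      intro j hj hjl
      obtain ⟨hwj, hjk⟩ := Finset.mem_Ico.mp hj
      rw [inner_smul_right, mul_eq_zero]
      right
      rcases hjl.lt_or_gt with hjl | hlj
      · exact inner_eq_zero_symm.mp (ih l hlk ((hw hlk.le).trans hwj) hjl)
      · exact ih j hjk ((hw hjk.le).trans hl) hlj
    rw [hp k, inner_sub_right, inner_sum,
      Finset.sum_eq_single_of_mem l (Finset.mem_Ico.mpr ⟨hl, hlk⟩) window_orthogonal,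
      ← inner_sub_right, inner_sub_inner_div_smul_self]

theorem mem_searchSpace (hp : IsTruncatedGramSchmidt 𝕜 w s p) (hk : w k ≤ k) :
    s k ∈ searchSpace 𝕜 w p k := by
  rw [← sub_add_cancel (s k) (∑ l ∈ Finset.Ico (w k) k, (⟪p l, s k⟫_𝕜 / ⟪p l, p l⟫_𝕜) • p l),
    ← hp k]
  refine add_mem (direction_mem_searchSpace hk le_rfl) (Submodule.sum_smul_mem _ _ fun l hl => ?_)
  obtain ⟨hwl, hlk⟩ := Finset.mem_Ico.mp hl
  exact direction_mem_searchSpace hwl hlk.le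

end IsTruncatedGramSchmidt

namespace IsExactLineSearch

theorem sub_succ_mem_searchSpace (he : IsExactLineSearch 𝕜 p e) (hl : w k ≤ l) (hlk : l ≤ k) :
    e l - e (l + 1) ∈ searchSpace 𝕜 w p k := by
  rw [he l, sub_sub_cancel]
  exact Submodule.smul_mem _ _ (direction_mem_searchSpace hl hlk)

theorem inner_error_succ_eq_zero (he : IsExactLineSearch 𝕜 p e)
    (hp : IsTruncatedGramSchmidt 𝕜 w s p) (hw : Monotone w) (hl : w k ≤ l) (hlk : l ≤ k) :
    ⟪p l, e (k + 1)⟫_𝕜 = 0 := by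
  induction k, hlk using Nat.le_induction with
  | base => rw [he l, inner_sub_inner_div_smul_self]
  | succ k hlk ih =>
    rw [he (k + 1), inner_sub_right, inner_smul_right, ih ((hw k.le_succ).trans hl),
      hp.inner_eq_zero hw hl (Nat.lt_succ_of_le hlk), mul_zero, sub_zero]

theorem inner_error_succ_eq_zero_of_mem (he : IsExactLineSearch 𝕜 p e)
    (hp : IsTruncatedGramSchmidt 𝕜 w s p) (hw : Monotone w) {z : E}
    (hz : z ∈ searchSpace 𝕜 w p k) : ⟪e (k + 1), z⟫_𝕜 = 0 := by
  have searchSpace_le_ker : searchSpace 𝕜 w p k ≤ (innerₛₗ 𝕜 (e (k + 1))).ker := by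
    refine Submodule.span_le.mpr ?_
    rintro _ ⟨l, ⟨hl, hlk⟩, rfl⟩
    exact inner_eq_zero_symm.mp (he.inner_error_succ_eq_zero hp hw hl hlk)
  exact searchSpace_le_ker hz

theorem norm_error_succ_le (he : IsExactLineSearch 𝕜 p e) (hp : IsTruncatedGramSchmidt 𝕜 w s p)
    (hw : Monotone w) {y : E} (hy : y - e (k + 1) ∈ searchSpace 𝕜 w p k) :
    ‖e (k + 1)‖ ≤ ‖y‖ :=
  norm_le_of_inner_sub_eq_zero (he.inner_error_succ_eq_zero_of_mem hp hw hy)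

end IsExactLineSearch

theorem pcg_le_heavy_ball_step_general (hw : Monotone w) (hp : IsTruncatedGramSchmidt 𝕜 w s p)
    (he : IsExactLineSearch 𝕜 p e) (hk : w k < k) (α β : 𝕜) :
    ‖e (k + 1)‖ ≤ ‖e k - α • s k - β • (e k - e (k - 1))‖ := by
  have current_step_mem : e k - e (k + 1) ∈ searchSpace 𝕜 w p k :=
    he.sub_succ_mem_searchSpace hk.le le_rfl
  have previous_step_mem : e k - e (k - 1) ∈ searchSpace 𝕜 w p k := by
    rw [← neg_sub, neg_mem_iff]
    simpa only [Nat.sub_add_cancel (Nat.one_le_of_lt hk)] using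
      he.sub_succ_mem_searchSpace (Nat.le_sub_one_of_lt hk) (Nat.sub_le k 1)
  refine he.norm_error_succ_le hp hw ?_
  rw [sub_right_comm, sub_right_comm (e k)]
  exact sub_mem (sub_mem current_step_mem (Submodule.smul_mem _ α (hp.mem_searchSpace hk.le)))
    (Submodule.smul_mem _ β previous_step_mem)

end EnergyNorm

theorem monotone_self_sub_of_succ_le {m : ℕ → ℕ} (hm : ∀ k, m (k + 1) ≤ m k + 1) :
    Monotone fun k => k - m k :=
  monotone_nat_of_le_succ fun k => by have := hm k; omega

theorem error_succ_eq_sub_smul {ι K : Type*} [Fintype ι] [DecidableEq ι] [Field K]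
    {A : Matrix ι ι K} (hA : IsUnit A.det) {b : ι → K} {x r p e : ℕ → ι → K}
    (hr : ∀ k, r k = b - A *ᵥ x k)
    (hx : ∀ k, x (k + 1) = x k + ((r k ⬝ᵥ p k) / ((A *ᵥ p k) ⬝ᵥ p k)) • p k)
    (he : ∀ k, e k = A⁻¹ *ᵥ b - x k) (k : ℕ) :
    e (k + 1) = e k - (((A *ᵥ e k) ⬝ᵥ p k) / ((A *ᵥ p k) ⬝ᵥ p k)) • p k := by
  have residual_eq : A *ᵥ e k = r k := by
    rw [he, hr, mulVec_sub, mulVec_mulVec, mul_nonsing_inv A hA, one_mulVec]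
  rw [residual_eq, he, he, hx, sub_add_eq_sub_sub]

/-- In the preconditioned method with variable preconditioning, if `k ≥ 1`,
`m k ≥ 1`, and `x l ≠ x*` for all `l ≤ k`, then
`‖e (k+1)‖_A ≤ ‖e k − α • s k − β • (e k − e (k−1))‖_A` for all real `α, β`. -/
theorem pcg_le_heavy_ball_step
    {n : ℕ} (A : Matrix (Fin n) (Fin n) ℝ) (hA : A.PosDef)
    (b x0 : Fin n → ℝ)
    (B : ℕ → Matrix (Fin n) (Fin n) ℝ) (hB : ∀ k, (B k).PosDef)
    (m : ℕ → ℕ) (hm0 : m 0 = 0) (hmle : ∀ k, m k ≤ k) (hmsucc : ∀ k, m (k + 1) ≤ m k + 1)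
    (x r s p e : ℕ → Fin n → ℝ)
    (hx0 : x 0 = x0)
    (hr : ∀ k, r k = b - A *ᵥ x k)
    (hs : ∀ k, s k = (B k)⁻¹ *ᵥ r k)
    (hp : ∀ k, p k = s k - ∑ l ∈ Finset.Ico (k - m k) k,
        (((A *ᵥ s k) ⬝ᵥ p l) / ((A *ᵥ p l) ⬝ᵥ p l)) • p l)
    (hxs : ∀ k, x (k + 1) = x k + ((r k ⬝ᵥ p k) / ((A *ᵥ p k) ⬝ᵥ p k)) • p k)
    (he : ∀ k, e k = A⁻¹ *ᵥ b - x k)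
    (k : ℕ) (hk : 1 ≤ k) (hmk : 1 ≤ m k) (hexact : ∀ l ≤ k, x l ≠ A⁻¹ *ᵥ b) :
    ∀ α β : ℝ, anorm A (e (k + 1)) ≤ anorm A (e k - α • s k - β • (e k - e (k - 1))) := by
  let := A.toSeminormedAddCommGroup hA.posSemidef
  let := A.toInnerProductSpace hA.posSemidef
  -- `⟪y, x⟫_ℝ` and `‖x‖` unfold to `(A *ᵥ x) ⬝ᵥ y` and `anorm A x`.
  exact pcg_le_heavy_ball_step_general (monotone_self_sub_of_succ_le hmsucc) hp
    (error_succ_eq_sub_smul (isUnit_iff_ne_zero.mpr hA.det_pos.ne') hr hxs he) (by omega)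
end
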